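/- Two words w and w' (in the letter alphabet A = {e⃗_i, e⃖_i : i ∈ ℕ}, with finite fibers) can be reduced to the same reduced word if and only if for every finite subset I ⊆ ℕ the finite words w↾I and w'↾I have the same reduction in the free group on {e⃗_i : i ∈ I}. -/

import Mathlib

open Set

noncomputable section

/-- A *reduction* of a word `w : S → A` over an alphabet `A` with letter-inversion
`inv`: a totally ordered set `R` (here: the linearly ordered index type `ι`) of disjoint
two-element subsets `{fst i, snd i}` of `S` such that the two elements of each pair
`p ∈ R` are adjacent in `S` minus the union of the pairs preceding `p`, and are mapped
by `w` to mutually inverse letters. -/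
structure Reduction {S A : Type} [LinearOrder S] (inv : A → A) (w : S → A) where
  /-- the (linearly ordered) index set of the reduction -/
  ι : Type
  [lin : LinearOrder ι]
  fst : ι → S
  snd : ι → S
  fst_lt_snd : ∀ i, fst i < snd i
  disjoint_pairs : ∀ i j, i ≠ j →
    fst i ≠ fst j ∧ fst i ≠ snd j ∧ snd i ≠ fst j ∧ snd i ≠ snd j
  inv_pair : ∀ i, w (snd i) = inv (w (fst i))
  adjacent : ∀ i, ∀ s : S, fst i < s → s < snd i →
    ∃ j, j < i ∧ (s = fst j ∨ s = snd j)

attribute [instance] Reduction.lin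

namespace Reduction

variable {S A : Type} [LinearOrder S] {inv : A → A} {w : S → A}

/-- The set of positions deleted by a reduction. -/
def deleted (R : Reduction inv w) : Set S := range R.fst ∪ range R.snd

/-- The word to which `w` reduces under the reduction `R`:
the restriction of `w` to the non-deleted positions. -/
def result (R : Reduction inv w) : {s : S // s ∉ R.deleted} → A := fun s => w s.1

end Reduction

/-- A word is *reduced* if it has no nonempty reduction. -/
def Reduced {S A : Type} [LinearOrder S] (inv : A → A) (w : S → A) : Prop :=
  ∀ R : Reduction inv w, IsEmpty R.ι

/-- Two words are the same *abstract word* if there is an order-preserving bijection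
between their position sets commuting with the labellings. -/
def WordEquiv {S₁ S₂ A : Type} [LinearOrder S₁] [LinearOrder S₂]
    (w₁ : S₁ → A) (w₂ : S₂ → A) : Prop :=
  ∃ e : S₁ ≃o S₂, ∀ s, w₂ (e s) = w₁ s

/-- The alphabet `A = {e⃗₀, e⃖₀, e⃗₁, e⃖₁, …}`: the letter `(b, i)` stands for the
oriented chord `e⃗ᵢ` if `b = true`, and for `e⃖ᵢ` if `b = false`. -/
abbrev Letter := Bool × ℕ

/-- The fixed-point-free involution pairing each letter with its inverse. -/
def Letter.inv (a : Letter) : Letter := (!a.1, a.2)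

/-- The set of positions of `w` whose letters have index in `I`
(the domain of the restricted word `w↾I`). -/
abbrev restDom {S : Type} (w : S → Letter) (I : Set ℕ) : Type := {s : S // (w s).2 ∈ I}

/-- The restriction `w↾I` of a word `w` to the letters with index in `I`. -/
def restr {S : Type} (w : S → Letter) (I : Set ℕ) : restDom w I → Letter :=
  fun s => w s.1

/-!
A word `w` and a word `w'` have a common reduct if and only if the word `w w'⁻¹` can be cancelled
completely, and a complete cancellation is the same thing as a noncrossing perfect pairing of
mutually inverse letters. Perfect noncrossing pairings restrict to the letters with index in any
set `I`. Conversely, every letter has only finitely many possible partners, so pairings of the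
restrictions to all finite `I` can be glued to a pairing of the whole word by compactness (König's
infinity lemma, here in the form of Rado's selection principle).
-/

namespace WordEquiv

variable {S₁ S₂ S₃ A : Type} [LinearOrder S₁] [LinearOrder S₂] [LinearOrder S₃]
  {w₁ : S₁ → A} {w₂ : S₂ → A} {w₃ : S₃ → A}

theorem symm (h : WordEquiv w₁ w₂) : WordEquiv w₂ w₁ := by
  obtain ⟨e, he⟩ := h
  exact ⟨e.symm, fun s => by rw [← he, e.apply_symm_apply]⟩

theorem trans (h : WordEquiv w₁ w₂) (h' : WordEquiv w₂ w₃) : WordEquiv w₁ w₃ := by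
  obtain ⟨e, he⟩ := h
  obtain ⟨e', he'⟩ := h'
  exact ⟨e.trans e', fun s => by rw [OrderIso.trans_apply, he', he]⟩

theorem of_strictMono {f : S₁ → S₂} (hf : StrictMono f) (hsurj : Function.Surjective f)
    (hw : ∀ s, w₂ (f s) = w₁ s) : WordEquiv w₁ w₂ :=
  ⟨hf.orderIsoOfSurjective f hsurj, hw⟩

end WordEquiv

section Reduction

variable {S S' A : Type} [LinearOrder S] [LinearOrder S'] {inv : A → A} {w : S → A} {w' : S' → A}

namespace Reduction

theorem mem_deleted {R : Reduction inv w} {s : S} :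
    s ∈ R.deleted ↔ ∃ i, s = R.fst i ∨ s = R.snd i := by
  simp only [deleted, mem_union, mem_range, exists_or, eq_comm]

theorem index_unique (R : Reduction inv w) {i j : R.ι} {s : S}
    (hi : s = R.fst i ∨ s = R.snd i) (hj : s = R.fst j ∨ s = R.snd j) : i = j := by
  by_contra hij
  have := R.disjoint_pairs i j hij
  grind

theorem fst_lt_fst_and_snd_lt_snd (R : Reduction inv w) {i j : R.ι} (hji : j < i)
    (h : R.fst j ∈ Ioo (R.fst i) (R.snd i) ∨ R.snd j ∈ Ioo (R.fst i) (R.snd i)) :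
    R.fst i < R.fst j ∧ R.snd j < R.snd i := by
  have not_between (s : S) (hs : s = R.fst i ∨ s = R.snd i) : s ∉ Icc (R.fst j) (R.snd j) := by
    rintro ⟨hle, hle'⟩
    have hne {t : S} (ht : t = R.fst j ∨ t = R.snd j) : s ≠ t := fun hst =>
      hji.ne' (R.index_unique hs (hst ▸ ht))
    obtain ⟨k, hkj, hk⟩ := R.adjacent j s (hle.lt_of_ne (hne (.inl rfl)).symm)
      (hle'.lt_of_ne (hne (.inr rfl)))
    exact (hkj.trans hji).ne (R.index_unique hk hs)
  have h₁ := not_between _ (.inl rfl)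
  have h₂ := not_between _ (.inr rfl)
  simp only [mem_Icc, mem_Ioo] at h h₁ h₂
  grind [R.fst_lt_snd j]

/-- Transport of a reduction along an isomorphism of words. -/
def map (R : Reduction inv w) (e : S ≃o S') (he : ∀ s, w' (e s) = w s) : Reduction inv w' where
  ι := R.ι
  fst i := e (R.fst i)
  snd i := e (R.snd i)
  fst_lt_snd i := e.strictMono (R.fst_lt_snd i)
  disjoint_pairs i j hij := by
    simpa only [ne_eq, EmbeddingLike.apply_eq_iff_eq] using R.disjoint_pairs i j hij
  inv_pair i := by rw [he, he, R.inv_pair]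
  adjacent i s h₁ h₂ := by
    obtain ⟨s, rfl⟩ := e.surjective s
    simpa only [EmbeddingLike.apply_eq_iff_eq] using
      R.adjacent i s (e.lt_iff_lt.1 h₁) (e.lt_iff_lt.1 h₂)

theorem apply_mem_deleted_map (R : Reduction inv w) (e : S ≃o S') (he : ∀ s, w' (e s) = w s)
    {s : S} : e s ∈ (R.map e he).deleted ↔ s ∈ R.deleted := by
  simp only [mem_deleted, map, EmbeddingLike.apply_eq_iff_eq]

theorem result_map (R : Reduction inv w) (e : S ≃o S') (he : ∀ s, w' (e s) = w s) :
    WordEquiv R.result (R.map e he).result := by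
  refine WordEquiv.of_strictMono
    (f := fun s => ⟨e s.1, (R.apply_mem_deleted_map e he).not.2 s.2⟩)
    (fun _ _ hst => e.strictMono hst) ?_ fun s => he s.1
  rintro ⟨t, ht⟩
  obtain ⟨s, rfl⟩ := e.surjective t
  exact ⟨⟨s, (R.apply_mem_deleted_map e he).not.1 ht⟩, rfl⟩

/-- Performing one reduction after another. -/
def comp (R : Reduction inv w) (T : Reduction inv R.result) : Reduction inv w where
  ι := R.ι ⊕ₗ T.ι
  fst i := Sum.elim R.fst (fun j => (T.fst j).1) (ofLex i)
  snd i := Sum.elim R.snd (fun j => (T.snd j).1) (ofLex i)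
  fst_lt_snd := by
    rintro (i | i)
    · exact R.fst_lt_snd i
    · exact T.fst_lt_snd i
  disjoint_pairs := by
    have ne_of_not_deleted (i : R.ι) (s : {s // s ∉ R.deleted}) : R.fst i ≠ s ∧ R.snd i ≠ s :=
      ⟨fun h => s.2 (mem_deleted.2 ⟨i, .inl h.symm⟩), fun h => s.2 (mem_deleted.2 ⟨i, .inr h.symm⟩)⟩
    rintro (i | i) (j | j) hij
    · exact R.disjoint_pairs i j fun h => hij (h ▸ rfl)
    · have h₁ := ne_of_not_deleted i (T.fst j)
      have h₂ := ne_of_not_deleted i (T.snd j)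
      exact ⟨h₁.1, h₂.1, h₁.2, h₂.2⟩
    · have h₁ := ne_of_not_deleted j (T.fst i)
      have h₂ := ne_of_not_deleted j (T.snd i)
      exact ⟨h₁.1.symm, h₁.2.symm, h₂.1.symm, h₂.2.symm⟩
    · have hT := T.disjoint_pairs i j fun h => hij (h ▸ rfl)
      simp only [ne_eq, Subtype.ext_iff] at hT
      exact hT
  inv_pair := by
    rintro (i | i)
    · exact R.inv_pair i
    · exact T.inv_pair i
  adjacent := by
    rintro (i | i) s h₁ h₂
    · obtain ⟨j, hj, h⟩ := R.adjacent i s h₁ h₂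
      exact ⟨Sum.inlₗ j, Sum.Lex.inl_lt_inl_iff.2 hj, h⟩
    · by_cases hs : s ∈ R.deleted
      · obtain ⟨j, hj⟩ := mem_deleted.1 hs
        exact ⟨Sum.inlₗ j, Sum.Lex.inl_lt_inr _ _, hj⟩
      · obtain ⟨j, hj, h⟩ := T.adjacent i ⟨s, hs⟩ h₁ h₂
        exact ⟨Sum.inrₗ j, Sum.Lex.inr_lt_inr_iff.2 hj,
          h.imp (congrArg Subtype.val) (congrArg Subtype.val)⟩

theorem deleted_comp (R : Reduction inv w) (T : Reduction inv R.result) :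
    (R.comp T).deleted = R.deleted ∪ Subtype.val '' T.deleted := by
  unfold deleted
  rw [image_union, ← range_comp, ← range_comp]
  ext s
  simp only [comp, mem_union, mem_range, Lex.exists, ofLex_toLex, Sum.exists, Sum.elim_inl,
    Sum.elim_inr, Function.comp_apply]
  tauto

theorem result_comp (R : Reduction inv w) (T : Reduction inv R.result) :
    WordEquiv T.result (R.comp T).result := by
  have mem_deleted_comp_iff (s : {s // s ∉ R.deleted}) :
      s.1 ∈ (R.comp T).deleted ↔ s ∈ T.deleted := by
    rw [deleted_comp, mem_union, or_iff_right s.2, Subtype.val_injective.mem_set_image]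
  refine WordEquiv.of_strictMono (f := fun s => ⟨s.1.1, (mem_deleted_comp_iff s.1).not.2 s.2⟩)
    (fun _ _ hst => hst) ?_ fun _ => rfl
  rintro ⟨s, hs⟩
  have hsR : s ∉ R.deleted := fun h => hs (R.deleted_comp T ▸ .inl h)
  exact ⟨⟨⟨s, hsR⟩, (mem_deleted_comp_iff ⟨s, hsR⟩).not.1 hs⟩, rfl⟩

end Reduction

theorem Reduced.congr (h : Reduced inv w) (hw : WordEquiv w w') : Reduced inv w' := by
  obtain ⟨e, he⟩ := hw.symm
  exact fun R => h (R.map e he)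

theorem exists_common_reduced_result_iff [Finite S] :
    (∃ (Q : Reduction inv w) (Q' : Reduction inv w'),
        Reduced inv Q.result ∧ Reduced inv Q'.result ∧ WordEquiv Q.result Q'.result) ↔
      ∃ (R : Reduction inv w) (R' : Reduction inv w'), WordEquiv R.result R'.result := by
  refine ⟨fun ⟨Q, Q', _, _, h⟩ => ⟨Q, Q', h⟩, fun ⟨R₀, R₀', h₀⟩ => ?_⟩
  let D : Set (Set S) :=
    {d | ∃ (R : Reduction inv w) (R' : Reduction inv w'),
      WordEquiv R.result R'.result ∧ R.deleted = d}
  obtain ⟨_, ⟨R, R', h, rfl⟩, hmax⟩ := (toFinite D).exists_maximal ⟨_, R₀, R₀', h₀, rfl⟩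
  have hR : Reduced inv R.result := by
    intro T
    obtain ⟨e, he⟩ := h
    have hcomp : WordEquiv (R.comp T).result (R'.comp (T.map e he)).result :=
      (R.result_comp T).symm.trans ((T.result_map e he).trans (R'.result_comp (T.map e he)))
    have hle : (R.comp T).deleted ⊆ R.deleted :=
      hmax ⟨R.comp T, R'.comp (T.map e he), hcomp, rfl⟩ (R.deleted_comp T ▸ subset_union_left)
    rw [Reduction.deleted_comp, union_subset_iff, image_subset_iff] at hle
    exact ⟨fun i => (T.fst i).2 (hle.2 (.inl ⟨i, rfl⟩))⟩
  exact ⟨R, R', hR, hR.congr h, h⟩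

end Reduction

section Pairing

variable {S S' A : Type} [LinearOrder S] [LinearOrder S'] {inv : A → A} {w : S → A} {w' : S' → A}

/-- A noncrossing pairing of positions of `w` carrying mutually inverse letters, as a symmetric
relation. Positions enclosed by a pair are paired, so that the pairs can be deleted from the inside
to the outside: pairings are reductions regardless of the order of deletion. -/
structure IsPairing (inv : A → A) (w : S → A) (P : S → S → Prop) : Prop where
  ne {s t} : P s t → s ≠ t
  symm {s t} : P s t → P t s
  unique {s t u} : P s t → P s u → t = u
  inv_of_lt {s t} : P s t → s < t → w t = inv (w s)
  nested {s t u} : P s t → u ∈ Ioo s t → ∃ v ∈ Ioo s t, P u v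

namespace Reduction

/-- The relation pairing the two positions of each pair of a reduction. -/
def Paired (R : Reduction inv w) (s t : S) : Prop :=
  ∃ i, (s = R.fst i ∧ t = R.snd i) ∨ (s = R.snd i ∧ t = R.fst i)

theorem isPairing_paired (R : Reduction inv w) : IsPairing inv w R.Paired where
  ne := by
    rintro _ _ ⟨i, ⟨rfl, rfl⟩ | ⟨rfl, rfl⟩⟩
    · exact (R.fst_lt_snd i).ne
    · exact (R.fst_lt_snd i).ne'
  symm := fun ⟨i, h⟩ => ⟨i, h.symm.imp And.symm And.symm⟩
  unique := by
    rintro s t u ⟨i, hi⟩ ⟨j, hj⟩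
    obtain rfl := R.index_unique (hi.imp And.left And.left) (hj.imp And.left And.left)
    grind [R.fst_lt_snd i]
  inv_of_lt := by
    rintro _ _ ⟨i, ⟨rfl, rfl⟩ | ⟨rfl, rfl⟩⟩ hlt
    · exact R.inv_pair i
    · exact absurd hlt (R.fst_lt_snd i).asymm
  nested := by
    rintro _ _ u ⟨i, ⟨rfl, rfl⟩ | ⟨rfl, rfl⟩⟩ hu
    · obtain ⟨j, hji, rfl | rfl⟩ := R.adjacent i u hu.1 hu.2
      · obtain ⟨-, hlt⟩ := R.fst_lt_fst_and_snd_lt_snd hji (.inl hu)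
        exact ⟨R.snd j, ⟨hu.1.trans (R.fst_lt_snd j), hlt⟩, j, .inl ⟨rfl, rfl⟩⟩
      · obtain ⟨hlt, -⟩ := R.fst_lt_fst_and_snd_lt_snd hji (.inr hu)
        exact ⟨R.fst j, ⟨hlt, (R.fst_lt_snd j).trans hu.2⟩, j, .inr ⟨rfl, rfl⟩⟩
    · exact absurd (hu.1.trans hu.2) (R.fst_lt_snd i).asymm

theorem mem_deleted_iff_exists_paired (R : Reduction inv w) {s : S} :
    s ∈ R.deleted ↔ ∃ t, R.Paired s t := by
  simp only [mem_deleted, Paired, exists_comm (α := S), exists_or, exists_and_left, exists_eq,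
    and_true]

end Reduction

namespace IsPairing

variable {P : S → S → Prop}

/-- The reduction with pairs given by `P`, ordered by a linear extension of the inclusion of the
intervals which the pairs span. -/
def toReduction (hP : IsPairing inv w P) : Reduction inv w where
  ι := LinearExtension {J : NonemptyInterval S // P J.fst J.snd}
  fst J := J.1.fst
  snd J := J.1.snd
  fst_lt_snd J := J.1.fst_le_snd.lt_of_ne (hP.ne J.2)
  disjoint_pairs := by
    rintro ⟨J, hJ⟩ ⟨K, hK⟩ hne
    have hends : ¬ (J.fst = K.fst ∧ J.snd = K.snd) := fun h =>
      hne (Subtype.ext (NonemptyInterval.ext (Prod.ext h.1 h.2)))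
    have hJ_lt := J.fst_le_snd.lt_of_ne (hP.ne hJ)
    have hK_le := K.fst_le_snd
    refine ⟨fun h => ?_, fun h => ?_, fun h => ?_, fun h => ?_⟩
    · exact hends ⟨h, hP.unique hJ (h ▸ hK)⟩
    · have : J.snd = K.fst := hP.unique hJ (h ▸ hP.symm hK)
      order
    · have : J.fst = K.snd := hP.unique (hP.symm hJ) (h ▸ hK)
      order
    · exact hends ⟨hP.unique (hP.symm hJ) (h ▸ hP.symm hK), h⟩
  inv_pair J := hP.inv_of_lt J.2 (J.1.fst_le_snd.lt_of_ne (hP.ne J.2))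
  adjacent := by
    rintro ⟨J, hJ⟩ u hu hu'
    have lt_of_mem_Ioo {K : NonemptyInterval S} (hK : P K.fst K.snd)
        (h : K.fst ∈ Ioo J.fst J.snd) (h' : K.snd ∈ Ioo J.fst J.snd) :
        toLinearExtension (⟨K, hK⟩ : {J : NonemptyInterval S // P J.fst J.snd}) <
          toLinearExtension ⟨J, hJ⟩ :=
      lt_of_le_of_ne (toLinearExtension.monotone ⟨h.1.le, h'.2.le⟩) fun heq =>
        h.1.ne' (congrArg (fun K : {J : NonemptyInterval S // P J.fst J.snd} => K.1.fst) heq)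
    obtain ⟨v, hv, huv⟩ := hP.nested hJ ⟨hu, hu'⟩
    rcases le_total u v with h | h
    · exact ⟨_, lt_of_mem_Ioo (K := ⟨(u, v), h⟩) huv ⟨hu, hu'⟩ hv, .inl rfl⟩
    · exact ⟨_, lt_of_mem_Ioo (K := ⟨(v, u), h⟩) (hP.symm huv) hv ⟨hu, hu'⟩, .inr rfl⟩

theorem mem_deleted_toReduction (hP : IsPairing inv w P) {s : S} :
    s ∈ hP.toReduction.deleted ↔ ∃ t, P s t := by
  rw [Reduction.mem_deleted]
  constructor
  · rintro ⟨⟨J, hJ⟩, rfl | rfl⟩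
    · exact ⟨J.snd, hJ⟩
    · exact ⟨J.fst, hP.symm hJ⟩
  · rintro ⟨t, hst⟩
    rcases le_total s t with h | h
    · exact ⟨toLinearExtension ⟨⟨(s, t), h⟩, hst⟩, .inl rfl⟩
    · exact ⟨toLinearExtension ⟨⟨(t, s), h⟩, hP.symm hst⟩, .inr rfl⟩

end IsPairing

/-- A word cancels completely if its positions admit a perfect noncrossing pairing of mutually
inverse letters, that is, if it reduces to the empty word. -/
def Cancels (inv : A → A) (w : S → A) : Prop :=
  ∃ P : S → S → Prop, IsPairing inv w P ∧ ∀ s, ∃ t, P s t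

theorem Cancels.congr (h : Cancels inv w) (hw : WordEquiv w w') : Cancels inv w' := by
  obtain ⟨e, he⟩ := hw.symm
  obtain ⟨P, hP, htotal⟩ := h
  refine ⟨fun s t => P (e s) (e t), ⟨fun h => ?_, hP.symm, fun h h' => ?_, fun h hlt => ?_,
    fun h hu => ?_⟩, fun s => ?_⟩
  · exact ne_of_apply_ne e (hP.ne h)
  · exact e.injective (hP.unique h h')
  · rw [← he, ← he, hP.inv_of_lt h (e.strictMono hlt)]
  · obtain ⟨v, hv, huv⟩ := hP.nested h ⟨e.strictMono hu.1, e.strictMono hu.2⟩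
    obtain ⟨v, rfl⟩ := e.surjective v
    exact ⟨v, ⟨e.lt_iff_lt.1 hv.1, e.lt_iff_lt.1 hv.2⟩, huv⟩
  · obtain ⟨t, ht⟩ := htotal (e s)
    obtain ⟨t, rfl⟩ := e.surjective t
    exact ⟨t, ht⟩

theorem cancels_congr (hw : WordEquiv w w') : Cancels inv w ↔ Cancels inv w' :=
  ⟨fun h => h.congr hw, fun h => h.congr hw.symm⟩

/-- `N` is the graph of an isomorphism between the words that remain when the positions in `D` are
deleted from `w` and those in `D'` from `w'`. -/
structure IsRemainderIso (w : S → A) (w' : S' → A) (D : Set S) (D' : Set S') (N : S → S' → Prop) :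
    Prop where
  label {s s'} : N s s' → w' s' = w s
  lt_iff_lt {s s' t t'} : N s s' → N t t' → (s < t ↔ s' < t')
  exists_right {s} : (∃ s', N s s') ↔ s ∉ D
  exists_left {s'} : (∃ s, N s s') ↔ s' ∉ D'

theorem IsRemainderIso.eq_iff_eq {D : Set S} {D' : Set S'} {N : S → S' → Prop}
    (hN : IsRemainderIso w w' D D' N) {s t : S} {s' t' : S'} (hs : N s s') (ht : N t t') :
    s = t ↔ s' = t' := by
  rw [← not_iff_not, ← ne_eq, ← ne_eq, ne_iff_lt_or_gt, ne_iff_lt_or_gt, hN.lt_iff_lt hs ht,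
    hN.lt_iff_lt ht hs]

theorem wordEquiv_iff_exists_isRemainderIso {D : Set S} {D' : Set S'} :
    WordEquiv (fun s : {s // s ∉ D} => w s) (fun s' : {s' // s' ∉ D'} => w' s') ↔
      ∃ N, IsRemainderIso w w' D D' N := by
  constructor
  · rintro ⟨e, he⟩
    refine ⟨fun s s' => ∃ x, x.1 = s ∧ (e x).1 = s', ?_, ?_, fun {s} => ?_, fun {s'} => ?_⟩
    · rintro _ _ ⟨x, rfl, rfl⟩
      exact he x
    · rintro _ _ _ _ ⟨x, rfl, rfl⟩ ⟨y, rfl, rfl⟩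
      exact (e.lt_iff_lt (x := x) (y := y)).symm
    · exact ⟨fun ⟨_, x, hx, _⟩ => hx ▸ x.2, fun hs => ⟨_, ⟨s, hs⟩, rfl, rfl⟩⟩
    · exact ⟨fun ⟨_, x, _, hx⟩ => hx ▸ (e x).2,
        fun hs' => ⟨_, e.symm ⟨s', hs'⟩, rfl, by rw [e.apply_symm_apply]⟩⟩
  · rintro ⟨N, hN⟩
    choose f hf using fun s : {s // s ∉ D} => hN.exists_right.2 s.2
    refine WordEquiv.of_strictMono (f := fun s => ⟨f s, hN.exists_left.1 ⟨s, hf s⟩⟩)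
      (fun s t hst => (hN.lt_iff_lt (hf s) (hf t)).1 hst) ?_ fun s => hN.label (hf s)
    rintro ⟨s', hs'⟩
    obtain ⟨s, hs⟩ := hN.exists_left.2 hs'
    exact ⟨⟨s, hN.exists_right.1 ⟨s', hs⟩⟩, Subtype.ext ((hN.eq_iff_eq (hf _) hs).1 rfl)⟩

namespace IsPairing

variable {P : S → S → Prop}

theorem mem_Ioo_of_mem_Ioo (hP : IsPairing inv w P) {s t u v : S} (hst : P s t) (huv : P u v)
    (hu : u ∈ Ioo s t) : v ∈ Ioo s t := by
  obtain ⟨v', hv', huv'⟩ := hP.nested hst hu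
  rwa [hP.unique huv huv']

theorem lt_of_unpaired_of_lt (hP : IsPairing inv w P) {s t u : S} (hs : ∀ v, ¬ P s v)
    (htu : P t u) (hst : s < t) : s < u := by
  by_contra! hus
  rcases hus.eq_or_lt with rfl | hus
  · exact hs t (hP.symm htu)
  · obtain ⟨v, -, hsv⟩ := hP.nested (hP.symm htu) ⟨hus, hst⟩
    exact hs v hsv

end IsPairing

end Pairing

section DivWord

open Sum OrderDual

variable {S S' A : Type} {inv : A → A} {w : S → A} {w' : S' → A}

/-- The word `w w'⁻¹`: the word `w` followed by the inverses of the letters of `w'` in reverse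
order. -/
def divWord (inv : A → A) (w : S → A) (w' : S' → A) : S ⊕ₗ S'ᵒᵈ → A
  | inlₗ s => w s
  | inrₗ s' => inv (w' (ofDual s'))

/-- The symmetric relation on the positions of `w w'⁻¹` given by relations `P` and `P'` within the
two words and a relation `N` between them. -/
def bridge (P : S → S → Prop) (P' : S' → S' → Prop) (N : S → S' → Prop) :
    S ⊕ₗ S'ᵒᵈ → S ⊕ₗ S'ᵒᵈ → Prop
  | inlₗ s, inlₗ t => P s t
  | inlₗ s, inrₗ t' => N s (ofDual t')
  | inrₗ s', inlₗ t => N t (ofDual s')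
  | inrₗ s', inrₗ t' => P' (ofDual s') (ofDual t')

variable [LinearOrder S] [LinearOrder S']

/-- A partner below `s` of a position `u` between `s` and `t` would enclose `s` but not `t`; hence
only the upper bound for partners needs to be checked. -/
theorem IsPairing.of_total {P : S → S → Prop} (ne : ∀ {s t}, P s t → s ≠ t)
    (symm : ∀ {s t}, P s t → P t s) (unique : ∀ {s t u}, P s t → P s u → t = u)
    (total : ∀ s, ∃ t, P s t) (inv_of_lt : ∀ {s t}, P s t → s < t → w t = inv (w s))
    (lt_of_mem_Ioo : ∀ {s t u v}, P s t → P u v → u ∈ Ioo s t → v < t) :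
    IsPairing inv w P where
  ne := ne
  symm := symm
  unique := unique
  inv_of_lt := inv_of_lt
  nested {s t u} hst hu := by
    obtain ⟨v, huv⟩ := total u
    refine ⟨v, ⟨lt_of_not_ge fun hvs => ?_, lt_of_mem_Ioo hst huv hu⟩, huv⟩
    rcases hvs.eq_or_lt with rfl | hvs
    · exact hu.2.ne (unique (symm huv) hst)
    · exact (lt_of_mem_Ioo (symm huv) hst ⟨hvs, hu.1⟩).asymm hu.2

theorem inr_lt_inr_iff_ofDual_lt_ofDual {s' t' : S'ᵒᵈ} :
    (inrₗ s' : S ⊕ₗ S'ᵒᵈ) < inrₗ t' ↔ ofDual t' < ofDual s' :=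
  Lex.inr_lt_inr_iff

section Bridge

variable {P : S → S → Prop} {P' : S' → S' → Prop} {N : S → S' → Prop}

theorem bridge_total (hN : IsRemainderIso w w' {s | ∃ t, P s t} {s' | ∃ t', P' s' t'} N)
    (x : S ⊕ₗ S'ᵒᵈ) : ∃ y, bridge P P' N x y := by
  rcases x with s | s'
  · by_cases hs : ∃ t, P s t
    · obtain ⟨t, ht⟩ := hs
      exact ⟨inlₗ t, ht⟩
    · obtain ⟨s', hs'⟩ := hN.exists_right.2 hs
      exact ⟨inrₗ (toDual s'), hs'⟩
  · by_cases hs' : ∃ t', P' (ofDual s') t'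
    · obtain ⟨t', ht'⟩ := hs'
      exact ⟨inrₗ (toDual t'), ht'⟩
    · obtain ⟨s, hs⟩ := hN.exists_left.2 hs'
      exact ⟨inlₗ s, hs⟩

theorem bridge_unique (hP : IsPairing inv w P) (hP' : IsPairing inv w' P')
    (hN : IsRemainderIso w w' {s | ∃ t, P s t} {s' | ∃ t', P' s' t'} N) {x y z : S ⊕ₗ S'ᵒᵈ}
    (h : bridge P P' N x y) (h' : bridge P P' N x z) : y = z := by
  rcases x with s | s' <;> rcases y with t | t' <;> rcases z with u | u'
  · exact congrArg inlₗ (hP.unique h h')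
  · exact absurd ⟨t, h⟩ (hN.exists_right.1 ⟨_, h'⟩)
  · exact absurd ⟨u, h'⟩ (hN.exists_right.1 ⟨_, h⟩)
  · exact congrArg inrₗ ((hN.eq_iff_eq h h').1 rfl)
  · exact congrArg inlₗ ((hN.eq_iff_eq h h').2 rfl)
  · exact absurd ⟨_, h'⟩ (hN.exists_left.1 ⟨t, h⟩)
  · exact absurd ⟨_, h⟩ (hN.exists_left.1 ⟨u, h'⟩)
  · exact congrArg inrₗ (hP'.unique h h')

theorem bridge_lt_of_mem_Ioo (hP : IsPairing inv w P) (hP' : IsPairing inv w' P')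
    (hN : IsRemainderIso w w' {s | ∃ t, P s t} {s' | ∃ t', P' s' t'} N) {x y u v : S ⊕ₗ S'ᵒᵈ}
    (hxy : bridge P P' N x y) (huv : bridge P P' N u v) (hu : u ∈ Ioo x y) : v < y := by
  obtain ⟨hxu, huy⟩ := hu
  rcases x with s | s' <;> rcases y with t | t' <;> rcases u with u | u'
  · have hu : u ∈ Ioo s t := ⟨Lex.inl_lt_inl_iff.1 hxu, Lex.inl_lt_inl_iff.1 huy⟩
    rcases v with v | v'
    · exact Lex.inl_lt_inl_iff.2 (hP.mem_Ioo_of_mem_Ioo hxy huv hu).2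
    · obtain ⟨v, -, huv'⟩ := hP.nested hxy hu
      exact absurd ⟨v, huv'⟩ (hN.exists_right.1 ⟨_, huv⟩)
  · exact absurd huy Lex.not_inr_lt_inl
  · rcases v with v | v'
    · exact Lex.inl_lt_inr _ _
    · exact inr_lt_inr_iff_ofDual_lt_ofDual.2 ((hN.lt_iff_lt hxy huv).1 (Lex.inl_lt_inl_iff.1 hxu))
  · rcases v with v | v'
    · exact Lex.inl_lt_inr _ _
    · exact inr_lt_inr_iff_ofDual_lt_ofDual.2 (hP'.lt_of_unpaired_of_lt
        (fun z hz => hN.exists_left.1 ⟨s, hxy⟩ ⟨z, hz⟩) huv (inr_lt_inr_iff_ofDual_lt_ofDual.1 huy))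
  · exact absurd hxu Lex.not_inr_lt_inl
  · exact absurd huy Lex.not_inr_lt_inl
  · exact absurd hxu Lex.not_inr_lt_inl
  · rcases v with v | v'
    · exact Lex.inl_lt_inr _ _
    · exact inr_lt_inr_iff_ofDual_lt_ofDual.2 (hP'.mem_Ioo_of_mem_Ioo (hP'.symm hxy) huv
        ⟨inr_lt_inr_iff_ofDual_lt_ofDual.1 huy, inr_lt_inr_iff_ofDual_lt_ofDual.1 hxu⟩).1

theorem isPairing_bridge (hinv : Function.Involutive inv) (hP : IsPairing inv w P)
    (hP' : IsPairing inv w' P')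
    (hN : IsRemainderIso w w' {s | ∃ t, P s t} {s' | ∃ t', P' s' t'} N) :
    IsPairing inv (divWord inv w w') (bridge P P' N) := by
  refine .of_total ?_ ?_ (bridge_unique hP hP' hN) (bridge_total hN) ?_
    (bridge_lt_of_mem_Ioo hP hP' hN)
  · rintro (s | s') (t | t') h heq
    · exact hP.ne h (inl_injective heq)
    · exact inl_ne_inr heq
    · exact inr_ne_inl heq
    · exact hP'.ne h (inr_injective heq)
  · rintro (s | s') (t | t') h
    exacts [hP.symm h, h, h, hP'.symm h]
  · rintro (s | s') (t | t') h hlt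
    · exact hP.inv_of_lt h (Lex.inl_lt_inl_iff.1 hlt)
    · exact congrArg inv (hN.label h)
    · exact absurd hlt Lex.not_inr_lt_inl
    · have h_label := hP'.inv_of_lt (hP'.symm h) (inr_lt_inr_iff_ofDual_lt_ofDual.1 hlt)
      exact congrArg inv ((hinv _).symm.trans (congrArg inv h_label.symm))

end Bridge

namespace IsPairing

variable {P : S ⊕ₗ S'ᵒᵈ → S ⊕ₗ S'ᵒᵈ → Prop}

theorem of_divWord_left (hP : IsPairing inv (divWord inv w w') P) :
    IsPairing inv w fun s t => P (inlₗ s) (inlₗ t) where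
  ne h := ne_of_apply_ne inlₗ (hP.ne h)
  symm h := hP.symm h
  unique h h' := inl_injective (hP.unique h h')
  inv_of_lt h hlt := hP.inv_of_lt h (Lex.inl_lt_inl_iff.2 hlt)
  nested h hu := by
    obtain ⟨v | v', hv, huv⟩ :=
      hP.nested h ⟨Lex.inl_lt_inl_iff.2 hu.1, Lex.inl_lt_inl_iff.2 hu.2⟩
    · exact ⟨v, ⟨Lex.inl_lt_inl_iff.1 hv.1, Lex.inl_lt_inl_iff.1 hv.2⟩, huv⟩
    · exact absurd hv.2 Lex.not_inr_lt_inl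

theorem of_divWord_right (hinv : Function.Involutive inv)
    (hP : IsPairing inv (divWord inv w w') P) :
    IsPairing inv w' fun s' t' => P (inrₗ (toDual s')) (inrₗ (toDual t')) where
  ne h := ne_of_apply_ne (fun s' => inrₗ (toDual s')) (hP.ne h)
  symm h := hP.symm h
  unique h h' := toDual.injective (inr_injective (hP.unique h h'))
  inv_of_lt {s' t'} h hlt := by
    have h_label : inv (w' s') = inv (inv (w' t')) :=
      hP.inv_of_lt (hP.symm h) (inr_lt_inr_iff_ofDual_lt_ofDual.2 hlt)
    rw [h_label, hinv]
  nested {s' t' u'} h hu := by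
    obtain ⟨v | v', hv, huv⟩ := hP.nested (u := inrₗ (toDual u')) (hP.symm h)
      ⟨inr_lt_inr_iff_ofDual_lt_ofDual.2 hu.2, inr_lt_inr_iff_ofDual_lt_ofDual.2 hu.1⟩
    · exact absurd hv.1 Lex.not_inr_lt_inl
    · exact ⟨ofDual v', ⟨inr_lt_inr_iff_ofDual_lt_ofDual.1 hv.2,
        inr_lt_inr_iff_ofDual_lt_ofDual.1 hv.1⟩, huv⟩

theorem isRemainderIso_of_divWord (hinv : Function.Injective inv)
    (hP : IsPairing inv (divWord inv w w') P) (htotal : ∀ x, ∃ y, P x y) :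
    IsRemainderIso w w' {s | ∃ t, P (inlₗ s) (inlₗ t)}
      {s' | ∃ t', P (inrₗ (toDual s')) (inrₗ (toDual t'))}
      fun s s' => P (inlₗ s) (inrₗ (toDual s')) where
  label h := hinv (hP.inv_of_lt h (Lex.inl_lt_inr _ _))
  lt_iff_lt {s s' t t'} hs ht := by
    have strictMono {s t : S} {s' t' : S'} (hs : P (inlₗ s) (inrₗ (toDual s')))
        (ht : P (inlₗ t) (inrₗ (toDual t'))) (hst : s < t) : s' < t' :=
      inr_lt_inr_iff_ofDual_lt_ofDual.1
        (hP.mem_Ioo_of_mem_Ioo hs ht ⟨Lex.inl_lt_inl_iff.2 hst, Lex.inl_lt_inr _ _⟩).2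
    refine ⟨strictMono hs ht, fun h => lt_of_not_ge fun hle => ?_⟩
    rcases hle.eq_or_lt with rfl | hlt
    · exact h.ne (inr_injective (hP.unique hs ht))
    · exact (strictMono ht hs hlt).asymm h
  exists_right {s} := by
    refine ⟨fun ⟨s', hs'⟩ ⟨t, ht⟩ => inl_ne_inr (hP.unique ht hs'), fun hs => ?_⟩
    obtain ⟨t | t', ht⟩ := htotal (inlₗ s)
    · exact absurd ⟨t, ht⟩ hs
    · exact ⟨ofDual t', ht⟩
  exists_left {s'} := by
    refine ⟨fun ⟨s, hs⟩ ⟨t', ht'⟩ => inl_ne_inr (hP.unique (hP.symm hs) ht'), fun hs' => ?_⟩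
    obtain ⟨t | t', ht⟩ := htotal (inrₗ (toDual s'))
    · exact ⟨t, hP.symm ht⟩
    · exact absurd ⟨ofDual t', ht⟩ hs'

end IsPairing

theorem exists_wordEquiv_result_iff_cancels_divWord (hinv : Function.Involutive inv) :
    (∃ (R : Reduction inv w) (R' : Reduction inv w'), WordEquiv R.result R'.result) ↔
      Cancels inv (divWord inv w w') := by
  have wordEquiv_result_iff (R : Reduction inv w) (R' : Reduction inv w') :
      WordEquiv R.result R'.result ↔ ∃ N, IsRemainderIso w w' R.deleted R'.deleted N :=
    wordEquiv_iff_exists_isRemainderIso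
  simp only [wordEquiv_result_iff]
  constructor
  · rintro ⟨R, R', N, hN⟩
    have deleted_eq := Set.ext fun _ => R.mem_deleted_iff_exists_paired
    have deleted_eq' := Set.ext fun _ => R'.mem_deleted_iff_exists_paired
    rw [deleted_eq, deleted_eq'] at hN
    exact ⟨bridge R.Paired R'.Paired N,
      isPairing_bridge hinv R.isPairing_paired R'.isPairing_paired hN, bridge_total hN⟩
  · rintro ⟨P, hP, htotal⟩
    refine ⟨hP.of_divWord_left.toReduction, (hP.of_divWord_right hinv).toReduction,
      fun s s' => P (inlₗ s) (inrₗ (toDual s')), ?_⟩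
    rw [Set.ext fun _ => hP.of_divWord_left.mem_deleted_toReduction,
      Set.ext fun _ => (hP.of_divWord_right hinv).mem_deleted_toReduction]
    exact hP.isRemainderIso_of_divWord hinv.injective htotal

end DivWord

theorem exists_rel_forall_finset_agree {L κ : Type*} {f : L → κ} (hf : ∀ k, (f ⁻¹' {k}).Finite)
    {P : Finset κ → L → L → Prop} (hP : ∀ I x y, P I x y → f y = f x) :
    ∃ Q : L → L → Prop, ∀ I : Finset κ, ∃ J, I ⊆ J ∧ ∀ x y, f x ∈ I → (Q x y ↔ P J x y) := by
  have (k : κ) : Finite (f ⁻¹' {k}) := hf k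
  obtain ⟨χ, hχ⟩ := Finset.rado_selection
    (β := fun k => f ⁻¹' {k} → f ⁻¹' {k} → Prop) (fun I k x y => P I x y)
  refine ⟨fun x y => ∃ h : f y = f x, χ (f x) ⟨x, rfl⟩ ⟨y, h⟩, fun I => ?_⟩
  obtain ⟨J, hIJ, hJ⟩ := hχ I
  refine ⟨J, hIJ, fun x y hx => ?_⟩
  simp only [hJ _ hx]
  exact ⟨fun ⟨_, h⟩ => h, fun h => ⟨hP J x y h, h⟩⟩

section Restrict

variable {L A : Type} {κ : Type*} [LinearOrder L] {inv : A → A} {v : L → A} {idx : A → κ}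

theorem IsPairing.idx_eq (hidx : ∀ a, idx (inv a) = idx a) {P : L → L → Prop}
    (hP : IsPairing inv v P) {x y : L} (h : P x y) : idx (v y) = idx (v x) := by
  rcases (hP.ne h).lt_or_gt with hlt | hlt
  · rw [hP.inv_of_lt h hlt, hidx]
  · rw [hP.inv_of_lt (hP.symm h) hlt, hidx]

theorem Cancels.domRestrict (hidx : ∀ a, idx (inv a) = idx a) (h : Cancels inv v) (I : Set κ) :
    Cancels inv (((idx ∘ v) ⁻¹' I).domRestrict v) := by
  obtain ⟨P, hP, htotal⟩ := h
  have mem_of_pair {x : L} (hx : x ∈ (idx ∘ v) ⁻¹' I) {y : L} (hxy : P x y) :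
      y ∈ (idx ∘ v) ⁻¹' I := by
    rwa [mem_preimage, Function.comp_apply, hP.idx_eq hidx hxy]
  refine ⟨fun x y => P x y, ⟨fun h => ne_of_apply_ne _ (hP.ne h), hP.symm,
    fun h h' => Subtype.ext (hP.unique h h'), fun h hlt => hP.inv_of_lt h hlt,
    fun {_ _ u} h hu => ?_⟩, fun x => ?_⟩
  · obtain ⟨z, hz, huz⟩ := hP.nested h hu
    exact ⟨⟨z, mem_of_pair u.2 huz⟩, hz, huz⟩
  · obtain ⟨y, hxy⟩ := htotal x
    exact ⟨⟨y, mem_of_pair x.2 hxy⟩, hxy⟩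

theorem Cancels.of_forall_finset (hidx : ∀ a, idx (inv a) = idx a)
    (hfin : ∀ k, ((idx ∘ v) ⁻¹' {k}).Finite)
    (h : ∀ I : Finset κ, Cancels inv (((idx ∘ v) ⁻¹' (I : Set κ)).domRestrict v)) :
    Cancels inv v := by
  classical
  choose P hP htotal using h
  obtain ⟨Q, hQ⟩ := exists_rel_forall_finset_agree hfin
    (P := fun I x y => ∃ (hx : idx (v x) ∈ I) (hy : idx (v y) ∈ I), P I ⟨x, hx⟩ ⟨y, hy⟩)
    (fun I _ _ ⟨_, _, h⟩ => (hP I).idx_eq hidx h)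
  refine ⟨Q, ⟨fun {x y} hxy => ?_, fun {x y} hxy => ?_, fun {x y z} hxy hxz => ?_,
    fun {x y} hxy hlt => ?_, fun {x y u} hxy hu => ?_⟩, fun x => ?_⟩
  · obtain ⟨J, -, hJ⟩ := hQ {idx (v x)}
    obtain ⟨_, _, h⟩ := (hJ x y (Finset.mem_singleton_self _)).1 hxy
    exact fun heq => (hP J).ne h (Subtype.ext heq)
  · obtain ⟨J, -, hJ⟩ := hQ {idx (v x), idx (v y)}
    obtain ⟨_, _, h⟩ := (hJ x y (by simp)).1 hxy
    exact (hJ y x (by simp)).2 ⟨_, _, (hP J).symm h⟩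
  · obtain ⟨J, -, hJ⟩ := hQ {idx (v x)}
    obtain ⟨_, _, h⟩ := (hJ x y (Finset.mem_singleton_self _)).1 hxy
    obtain ⟨_, _, h'⟩ := (hJ x z (Finset.mem_singleton_self _)).1 hxz
    exact congrArg Subtype.val ((hP J).unique h h')
  · obtain ⟨J, -, hJ⟩ := hQ {idx (v x)}
    obtain ⟨_, _, h⟩ := (hJ x y (Finset.mem_singleton_self _)).1 hxy
    exact (hP J).inv_of_lt h hlt
  · obtain ⟨J, hIJ, hJ⟩ := hQ {idx (v x), idx (v u)}
    obtain ⟨_, _, h⟩ := (hJ x y (by simp)).1 hxy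
    obtain ⟨z, hz, huz⟩ := (hP J).nested (u := ⟨u, hIJ (by simp)⟩) h hu
    exact ⟨z, hz, (hJ u z (by simp)).2 ⟨_, _, huz⟩⟩
  · obtain ⟨J, hIJ, hJ⟩ := hQ {idx (v x)}
    obtain ⟨y, hy⟩ := htotal J ⟨x, hIJ (Finset.mem_singleton_self _)⟩
    exact ⟨y, (hJ x y (Finset.mem_singleton_self _)).2 ⟨_, _, hy⟩⟩

theorem cancels_iff_forall_finset (hidx : ∀ a, idx (inv a) = idx a)
    (hfin : ∀ k, ((idx ∘ v) ⁻¹' {k}).Finite) :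
    Cancels inv v ↔
      ∀ I : Finset κ, Cancels inv (((idx ∘ v) ⁻¹' (I : Set κ)).domRestrict v) :=
  ⟨fun h I => h.domRestrict hidx I, .of_forall_finset hidx hfin⟩

end Restrict

section RestrictDivWord

open Sum OrderDual

variable {S S' A : Type} {κ : Type*} {inv : A → A} {w : S → A} {w' : S' → A} {idx : A → κ}

theorem finite_preimage_idx_divWord (hidx : ∀ a, idx (inv a) = idx a)
    (hw : ∀ k, ((idx ∘ w) ⁻¹' {k}).Finite) (hw' : ∀ k, ((idx ∘ w') ⁻¹' {k}).Finite) (k : κ) :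
    ((idx ∘ divWord inv w w') ⁻¹' {k}).Finite := by
  refine (((hw k).image inlₗ).union ((hw' k).image (inrₗ ∘ toDual))).subset ?_
  rintro (s | s') hs
  · exact .inl ⟨s, hs, rfl⟩
  · exact .inr ⟨ofDual s', (hidx _).symm.trans hs, rfl⟩

theorem wordEquiv_divWord_domRestrict [LinearOrder S] [LinearOrder S']
    (hidx : ∀ a, idx (inv a) = idx a) (I : Set κ) :
    WordEquiv
      (divWord inv (((idx ∘ w) ⁻¹' I).domRestrict w) (((idx ∘ w') ⁻¹' I).domRestrict w'))
      (((idx ∘ divWord inv w w') ⁻¹' I).domRestrict (divWord inv w w')) := by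
  let f : (idx ∘ w) ⁻¹' I ⊕ₗ ((idx ∘ w') ⁻¹' I)ᵒᵈ → (idx ∘ divWord inv w w') ⁻¹' I
    | inlₗ s => ⟨inlₗ s.1, s.2⟩
    | inrₗ s' => ⟨inrₗ (toDual (ofDual s').1), by
        have := (ofDual s').2
        rwa [mem_preimage, Function.comp_apply, ← hidx] at this⟩
  refine WordEquiv.of_strictMono (f := f) ?_ ?_ ?_
  · rintro (s | s') (t | t') hlt
    · exact Lex.inl_lt_inl_iff.2 (show s < t from Lex.inl_lt_inl_iff.1 hlt)
    · exact Lex.inl_lt_inr _ _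
    · exact absurd hlt Lex.not_inr_lt_inl
    · have hlt' : ofDual t' < ofDual s' := inr_lt_inr_iff_ofDual_lt_ofDual.1 hlt
      exact inr_lt_inr_iff_ofDual_lt_ofDual.2 hlt'
  · rintro ⟨s | s', hs⟩
    · exact ⟨inlₗ ⟨s, hs⟩, rfl⟩
    · exact ⟨inrₗ (toDual ⟨ofDual s', (congrArg (· ∈ I) (hidx _)).mp hs⟩), rfl⟩
  · rintro (s | s') <;> rfl

end RestrictDivWord

theorem statement11_general {S S' A : Type} {κ : Type*} [LinearOrder S] [LinearOrder S']
    {inv : A → A} (hinv : Function.Involutive inv) {idx : A → κ} (hidx : ∀ a, idx (inv a) = idx a)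
    {w : S → A} {w' : S' → A} (hw : ∀ k, ((idx ∘ w) ⁻¹' {k}).Finite)
    (hw' : ∀ k, ((idx ∘ w') ⁻¹' {k}).Finite) :
    (∃ (R : Reduction inv w) (R' : Reduction inv w'), WordEquiv R.result R'.result) ↔
      ∀ I : Finset κ,
        ∃ (Q : Reduction inv (((idx ∘ w) ⁻¹' I).domRestrict w))
          (Q' : Reduction inv (((idx ∘ w') ⁻¹' I).domRestrict w')),
          Reduced inv Q.result ∧ Reduced inv Q'.result ∧ WordEquiv Q.result Q'.result := by
  rw [exists_wordEquiv_result_iff_cancels_divWord hinv,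
    cancels_iff_forall_finset hidx (finite_preimage_idx_divWord hidx hw hw')]
  refine forall_congr' fun I => ?_
  have : Finite ((idx ∘ w) ⁻¹' I) := I.finite_toSet.preimage' fun k _ => hw k
  rw [exists_common_reduced_result_iff, exists_wordEquiv_result_iff_cancels_divWord hinv,
    cancels_congr (wordEquiv_divWord_domRestrict hidx I)]

namespace Letter

theorem inv_involutive : Function.Involutive inv := fun a =>
  Prod.ext (Bool.not_not a.1) rfl

theorem finite_preimage_snd {S : Type} {w : S → Letter} (hw : ∀ a, {s | w s = a}.Finite) (k : ℕ) :
    ((Prod.snd ∘ w) ⁻¹' {k}).Finite := by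
  have hletters : (Prod.snd ⁻¹' {k} : Set Letter).Finite :=
    (finite_univ.prod (finite_singleton k)).subset fun _ ha => ⟨trivial, ha⟩
  exact hletters.preimage' fun a _ => hw a

end Letter

/-- Lemma `reduceonI`. Two words `w, w'` in the alphabet
`A = {e⃗ᵢ, e⃖ᵢ : i ∈ ℕ}` (countable totally ordered domains, finite fibers) can be
reduced to the same abstract word if and only if for every finite `I ⊆ ℕ` the finite
restrictions `w↾I` and `w'↾I` have the same (unique) reduced form `r(w↾I) = r(w'↾I)`. -/
theorem statement11 {S S' : Type} [LinearOrder S] [Countable S]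
    [LinearOrder S'] [Countable S']
    (w : S → Letter) (w' : S' → Letter)
    (hfib : ∀ a : Letter, {s | w s = a}.Finite)
    (hfib' : ∀ a : Letter, {s | w' s = a}.Finite) :
    (∃ (R : Reduction Letter.inv w) (R' : Reduction Letter.inv w'),
        WordEquiv R.result R'.result) ↔
      ∀ I : Finset ℕ,
        ∃ (Q : Reduction Letter.inv (restr w (I : Set ℕ)))
          (Q' : Reduction Letter.inv (restr w' (I : Set ℕ))),
          Reduced Letter.inv Q.result ∧ Reduced Letter.inv Q'.result ∧
          WordEquiv Q.result Q'.result := by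
  exact statement11_general Letter.inv_involutive (fun _ => rfl)
    (Letter.finite_preimage_snd hfib) (Letter.finite_preimage_snd hfib')
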